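/- Let P be a real positive-definite n×n matrix, A_cl and G real n×n matrices, d ∈ ℝⁿ, λ_δ > 0, λ_δε ≥ 0, ε > 0, and δ̄ > 0. Assume that for all δ, e ∈ ℝⁿ: δᵀ·(A_clᵀ·P + P·A_cl)·δ + 2·δᵀ·P·(G·e + d) ≤ -λ_δ·(δᵀ·P·δ - δ̄²) + λ_δε·(eᵀ·P·e - ε²). Let e : ℝ → ℝⁿ be continuous with e(t)ᵀ·P·e(t) ≤ ε² for all t ≥ 0, and let δ : ℝ → ℝⁿ be differentiable with δ'(t) = A_cl·δ(t) + G·e(t) + d for all t ≥ 0 and δ(0)ᵀ·P·δ(0) ≤ δ̄². Then δ(t)ᵀ·P·δ(t) ≤ δ̄² for all t ≥ 0. -/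

import Mathlib

open Matrix

/-!
With `V = δᵀ P δ`, symmetry of `P` turns the derivative of `V` along the error dynamics into the
left-hand side of the S-procedure inequality. Since `e` stays in its ellipsoid, the `lamδε` term
there is nonpositive, so `V' ≤ -lamδ (V - δbar²)`. Hence `exp (lamδ t) (V t - δbar²)` is
nonincreasing on `[0, ∞)`, and being nonpositive at `0` it stays nonpositive.
-/

lemma hasDerivAt_quadForm {n : ℕ} (P : Matrix (Fin n) (Fin n) ℝ)
    {x : ℝ → Fin n → ℝ} {x' : Fin n → ℝ} {t : ℝ} (hx : HasDerivAt x x' t) :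
    HasDerivAt (fun s => x s ⬝ᵥ (P *ᵥ x s))
      (x' ⬝ᵥ (P *ᵥ x t) + x t ⬝ᵥ (P *ᵥ x')) t := by
  have hc : ∀ i, HasDerivAt (fun s => x s i) (x' i) t := hasDerivAt_pi.1 hx
  have hPx : ∀ i, HasDerivAt (fun s => (P *ᵥ x s) i) ((P *ᵥ x') i) t := fun i => by
    simp only [mulVec, dotProduct]
    exact HasDerivAt.fun_sum fun j _ => (hc j).const_mul (P i j)
  have h : HasDerivAt (fun s => ∑ i, x s i * (P *ᵥ x s) i)
      (∑ i, (x' i * (P *ᵥ x t) i + x t i * (P *ᵥ x') i)) t :=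
    HasDerivAt.fun_sum fun i _ => (hc i).mul (hPx i)
  rw [Finset.sum_add_distrib] at h
  exact h

/-- For symmetric `P`, the derivative of `xᵀ P x` along `x' = A x + w`, rewritten in the form
used by the S-procedure. -/
lemma quadForm_deriv_eq {n : ℕ} {P : Matrix (Fin n) (Fin n) ℝ} (hP : Pᵀ = P)
    (A : Matrix (Fin n) (Fin n) ℝ) (x w : Fin n → ℝ) :
    (A *ᵥ x + w) ⬝ᵥ (P *ᵥ x) + x ⬝ᵥ (P *ᵥ (A *ᵥ x + w)) =
      x ⬝ᵥ ((Aᵀ * P + P * A) *ᵥ x) + 2 * (x ⬝ᵥ (P *ᵥ w)) := by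
  have h1 : (A *ᵥ x) ⬝ᵥ (P *ᵥ x) = x ⬝ᵥ (Aᵀ *ᵥ (P *ᵥ x)) := by
    rw [dotProduct_mulVec x, vecMul_transpose]
  have h2 : w ⬝ᵥ (P *ᵥ x) = x ⬝ᵥ (P *ᵥ w) := by
    rw [dotProduct_mulVec, ← mulVec_transpose, hP, dotProduct_comm]
  simp only [add_mulVec, mulVec_add, add_dotProduct, dotProduct_add, ← mulVec_mulVec, h1, h2]
  ring

/-- Controller error tube: under the S-procedure condition with multipliers
`λ_δ > 0` and `λ_δε ≥ 0`, and given that the observer error `e` stays in the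
ellipsoid `{e : eᵀ P e ≤ ε²}`, the ellipsoid `{δ : δᵀ P δ ≤ δ̄²}` is positively
invariant along `δ' = A_cl δ + G e + d`. -/
theorem controller_error_tube_invariance
    {n : ℕ}
    (P Acl G : Matrix (Fin n) (Fin n) ℝ) (d : Fin n → ℝ)
    (lamδ lamδε ε δbar : ℝ)
    (hP : P.PosDef) (hlamδ : lamδ > 0) (hlamδε : lamδε ≥ 0)
    (hε : ε > 0) (hδbar : δbar > 0)
    (hS : ∀ δ e : Fin n → ℝ,
      δ ⬝ᵥ ((Aclᵀ * P + P * Acl) *ᵥ δ) + 2 * (δ ⬝ᵥ (P *ᵥ (G *ᵥ e + d))) ≤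
        -lamδ * (δ ⬝ᵥ (P *ᵥ δ) - δbar ^ 2) + lamδε * (e ⬝ᵥ (P *ᵥ e) - ε ^ 2))
    (e : ℝ → Fin n → ℝ)
    (hecont : Continuous e)
    (hebound : ∀ t ≥ (0 : ℝ), e t ⬝ᵥ (P *ᵥ e t) ≤ ε ^ 2)
    (δ : ℝ → Fin n → ℝ)
    (hdiff : Differentiable ℝ δ)
    (hode : ∀ t ≥ (0 : ℝ), deriv δ t = Acl *ᵥ δ t + G *ᵥ e t + d)
    (h0 : δ 0 ⬝ᵥ (P *ᵥ δ 0) ≤ δbar ^ 2) :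
    ∀ t ≥ (0 : ℝ), δ t ⬝ᵥ (P *ᵥ δ t) ≤ δbar ^ 2 := by
  have hsymm : Pᵀ = P := by
    simpa [conjTranspose_eq_transpose_of_trivial] using hP.isHermitian.eq
  have hV := fun t => hasDerivAt_quadForm P (hdiff t).hasDerivAt
  have hW := fun t : ℝ =>
    ((hasDerivAt_id t).const_mul lamδ).exp.mul ((hV t).sub_const (δbar ^ 2))
  have hanti := antitoneOn_of_deriv_nonpos (convex_Ici (0 : ℝ))
    (fun t _ => (hW t).continuousAt.continuousWithinAt)
    (fun t _ => (hW t).differentiableAt.differentiableWithinAt)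
    (fun t ht => by
      rw [interior_Ici] at ht
      have ht0 : (0 : ℝ) ≤ t := le_of_lt ht
      have hVle : deriv δ t ⬝ᵥ (P *ᵥ δ t) + δ t ⬝ᵥ (P *ᵥ deriv δ t) ≤
          -lamδ * (δ t ⬝ᵥ (P *ᵥ δ t) - δbar ^ 2) := by
        rw [hode t ht0, add_assoc, quadForm_deriv_eq hsymm]
        have hmul := mul_nonpos_of_nonneg_of_nonpos hlamδε (sub_nonpos.2 (hebound t ht0))
        linarith [hS (δ t) (e t)]
      rw [(hW t).deriv]
      have hexp := mul_le_mul_of_nonneg_left hVle (Real.exp_pos (lamδ * t)).le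
      simp only [id]
      linarith)
  intro t ht
  have hle := hanti (Set.mem_Ici.2 le_rfl) (Set.mem_Ici.2 ht) ht
  simp only [Pi.mul_apply, id, mul_zero, Real.exp_zero, one_mul] at hle
  exact sub_nonpos.1 (nonpos_of_mul_nonpos_right (hle.trans (sub_nonpos.2 h0))
    (Real.exp_pos (lamδ * t)))
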